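/- arXiv:0901.2776 — 2 statements merged into one kernel-verified Lean document; each statement's English description precedes it below -/
import Mathlib

section
/- Suppose ρ ∈ (0,1) is irrational and its continued fraction partial quotients satisfy aₙ ≤ n² for all sufficiently large n. Then there exists a constant c > 0 such that |pₙ − qₙ·ρ| ≥ c/(qₙ·(ln qₙ)²) for all n ≥ 2, where pₙ/qₙ are the convergents of ρ. -/
/-!
Write `xₙ = Gⁿ ρ` for the Gauss orbit, so `1 / xₙ = aₙ₊₁ + xₙ₊₁` with `0 < xₙ < 1` by irrationality.
The remainders `dₙ = qₙ ρ - pₙ` satisfy `dₙ₊₁ = -xₙ₊₁ dₙ`, from which the exact formula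
`|dₙ| (qₙ₊₁ + xₙ₊₁ qₙ) = 1` follows (`abs_rem_mul`). As `qₙ₊₁ ≤ (aₙ₊₁ + 1) qₙ`, this gives
`|dₙ| ≥ 1 / ((aₙ₊₁ + 2) qₙ)`.

The Diophantine condition yields `aₙ₊₁ + 2 ≤ K n²` for all `n ≥ 1`, with `K` absorbing the finitely
many exceptional quotients. Since `qₙ₊₂ ≥ 2 qₙ`, the denominators grow exponentially
(`two_pow_le_cfq`), so `n log 2 ≤ 3 log qₙ` for `n ≥ 2`, and `n²` may be replaced by a multiple of
`(log qₙ)²`.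
-/

open MeasureTheory Filter

/-- The Gauss map `x ↦ {1/x}`. -/
noncomputable def gaussMap (x : ℝ) : ℝ := Int.fract (1 / x)

/-- The `n`-th continued fraction partial quotient of `ρ` (for `n ≥ 1`):
`aₙ(ρ) = ⌊1 / G^[n-1] ρ⌋` where `G` is the Gauss map. -/
noncomputable def cfa (ρ : ℝ) (n : ℕ) : ℤ := ⌊1 / (gaussMap^[n - 1] ρ)⌋

/-- The Diophantine condition (2): `aₙ ≤ n²` for all sufficiently large `n`. -/
def DiophCond (ρ : ℝ) : Prop := ∃ N : ℕ, ∀ n : ℕ, N ≤ n → cfa ρ n ≤ (n : ℤ) ^ 2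

/-- Denominators `qₙ` of the continued fraction convergents of `ρ`:
`q₀ = 1`, `q₁ = a₁`, `q_{n+2} = a_{n+2} q_{n+1} + qₙ`. -/
noncomputable def cfq (ρ : ℝ) : ℕ → ℤ
  | 0 => 1
  | 1 => cfa ρ 1
  | n + 2 => cfa ρ (n + 2) * cfq ρ (n + 1) + cfq ρ n

/-- Numerators `pₙ` of the continued fraction convergents of `ρ`:
`p₀ = 0`, `p₁ = 1`, `p_{n+2} = a_{n+2} p_{n+1} + pₙ`. -/
noncomputable def cfp (ρ : ℝ) : ℕ → ℤ
  | 0 => 0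
  | 1 => 1
  | n + 2 => cfa ρ (n + 2) * cfp ρ (n + 1) + cfp ρ n

/-- Distance from a real number to the nearest integer. -/
noncomputable def distNearestInt (t : ℝ) : ℝ := |t - round t|

lemma orbit_mem {ρ : ℝ} (hρ : ρ ∈ Set.Ioo (0 : ℝ) 1) (hirr : Irrational ρ) (n : ℕ) :
    gaussMap^[n] ρ ∈ Set.Ioo (0 : ℝ) 1 ∧ Irrational (gaussMap^[n] ρ) := by
  induction n with
  | zero => exact ⟨hρ, hirr⟩
  | succ n ih =>
    rw [Function.iterate_succ_apply']
    have hi : Irrational (gaussMap (gaussMap^[n] ρ)) := by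
      unfold gaussMap Int.fract
      rw [one_div]
      exact (ih.2.inv).sub_intCast _
    exact ⟨⟨lt_of_le_of_ne (Int.fract_nonneg _) hi.ne_zero.symm, Int.fract_lt_one _⟩, hi⟩

lemma orbit_mul {ρ : ℝ} (hρ : ρ ∈ Set.Ioo (0 : ℝ) 1) (hirr : Irrational ρ) (n : ℕ) :
    gaussMap^[n] ρ * (cfa ρ (n + 1) + gaussMap^[n + 1] ρ) = 1 := by
  have h := (orbit_mem hρ hirr n).1.1
  rw [Function.iterate_succ_apply']
  simp only [cfa, gaussMap, Nat.add_sub_cancel]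
  rw [Int.floor_add_fract, mul_one_div_cancel h.ne']

lemma one_le_cfa {ρ : ℝ} (hρ : ρ ∈ Set.Ioo (0 : ℝ) 1) (hirr : Irrational ρ) (n : ℕ) :
    1 ≤ cfa ρ (n + 1) := by
  have h := (orbit_mem hρ hirr n).1
  simp only [cfa, Nat.add_sub_cancel]
  rw [Int.le_floor]
  push_cast
  exact (one_le_div h.1).2 h.2.le

lemma cfq_pos_mono {ρ : ℝ} (hρ : ρ ∈ Set.Ioo (0 : ℝ) 1) (hirr : Irrational ρ) (n : ℕ) :
    1 ≤ cfq ρ n ∧ cfq ρ n ≤ cfq ρ (n + 1) := by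
  induction n with
  | zero => exact ⟨le_rfl, one_le_cfa hρ hirr 0⟩
  | succ n ih =>
    have ha := one_le_cfa hρ hirr (n + 1)
    refine ⟨ih.1.trans ih.2, ?_⟩
    rw [cfq]
    nlinarith

/-- The remainders `qₙ ρ - pₙ` alternate in sign and are multiplied by `xₙ₊₁` at each step. -/
lemma rem_succ {ρ : ℝ} (hρ : ρ ∈ Set.Ioo (0 : ℝ) 1) (hirr : Irrational ρ) (n : ℕ) :
    (cfp ρ (n + 1) : ℝ) - cfq ρ (n + 1) * ρ =
      -gaussMap^[n + 1] ρ * ((cfp ρ n : ℝ) - cfq ρ n * ρ) := by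
  induction n with
  | zero =>
    have h := orbit_mul hρ hirr 0
    simp only [cfp, cfq, zero_add, Function.iterate_zero, id] at h ⊢
    push_cast
    linear_combination -h
  | succ n ih =>
    have h := orbit_mul hρ hirr (n + 1)
    rw [show n + 1 + 1 = n + 2 from rfl] at *
    simp only [cfp, cfq]
    push_cast
    linear_combination (cfa ρ (n + 2) + gaussMap^[n + 2] ρ : ℝ) * ih -
      ((cfp ρ n : ℝ) - cfq ρ n * ρ) * h

/-- The exact size of the remainder: `|qₙ ρ - pₙ| = 1 / (qₙ₊₁ + xₙ₊₁ qₙ)`. -/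
lemma abs_rem_mul {ρ : ℝ} (hρ : ρ ∈ Set.Ioo (0 : ℝ) 1) (hirr : Irrational ρ) (n : ℕ) :
    |(cfp ρ n : ℝ) - cfq ρ n * ρ| * (cfq ρ (n + 1) + gaussMap^[n + 1] ρ * cfq ρ n) = 1 := by
  induction n with
  | zero =>
    have h := orbit_mul hρ hirr 0
    simp only [cfp, cfq, zero_add, Function.iterate_zero, id] at h ⊢
    push_cast
    rw [zero_sub, one_mul, abs_neg, abs_of_pos hρ.1, mul_one]
    exact h
  | succ n ih =>
    have h := orbit_mul hρ hirr (n + 1)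
    rw [rem_succ hρ hirr n, abs_mul, abs_neg, abs_of_pos (orbit_mem hρ hirr (n + 1)).1.1]
    rw [show n + 1 + 1 = n + 2 from rfl] at *
    rw [show cfq ρ (n + 2) = cfa ρ (n + 2) * cfq ρ (n + 1) + cfq ρ n from rfl]
    push_cast
    linear_combination ih + |(cfp ρ n : ℝ) - cfq ρ n * ρ| * cfq ρ (n + 1) * h

lemma abs_rem_lower {ρ : ℝ} (hρ : ρ ∈ Set.Ioo (0 : ℝ) 1) (hirr : Irrational ρ) (n : ℕ) :
    1 ≤ |(cfp ρ (n + 1) : ℝ) - cfq ρ (n + 1) * ρ| *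
      (cfq ρ (n + 1) * (cfa ρ (n + 2) + 2)) := by
  rw [← abs_rem_mul hρ hirr (n + 1)]
  have hx := (orbit_mem hρ hirr (n + 2)).1.2
  have h0 : (1 : ℝ) ≤ cfq ρ (n + 1) := by exact_mod_cast (cfq_pos_mono hρ hirr (n + 1)).1
  have h1 : (cfq ρ n : ℝ) ≤ cfq ρ (n + 1) := by exact_mod_cast (cfq_pos_mono hρ hirr n).2
  refine mul_le_mul_of_nonneg_left ?_ (abs_nonneg _)
  rw [show n + 1 + 1 = n + 2 from rfl,
    show cfq ρ (n + 2) = cfa ρ (n + 2) * cfq ρ (n + 1) + cfq ρ n from rfl]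
  push_cast
  nlinarith

/-- Exponential growth of the denominators, coming from `qₙ₊₂ ≥ 2 qₙ`. -/
lemma two_pow_le_cfq {ρ : ℝ} (hρ : ρ ∈ Set.Ioo (0 : ℝ) 1) (hirr : Irrational ρ) :
    ∀ n : ℕ, (2 : ℤ) ^ n ≤ 2 * cfq ρ n ^ 2
  | 0 => by simp [cfq]
  | 1 => by nlinarith [(cfq_pos_mono hρ hirr 1).1]
  | n + 2 => by
    have ih := two_pow_le_cfq hρ hirr n
    have h0 := cfq_pos_mono hρ hirr n
    have ha := one_le_cfa hρ hirr (n + 1)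
    have h : 2 * cfq ρ n ≤ cfq ρ (n + 2) := by
      rw [show cfq ρ (n + 2) = cfa ρ (n + 2) * cfq ρ (n + 1) + cfq ρ n from rfl]
      nlinarith
    rw [pow_add]
    nlinarith

lemma nat_mul_log_le {ρ : ℝ} (hρ : ρ ∈ Set.Ioo (0 : ℝ) 1) (hirr : Irrational ρ) (n : ℕ)
    (hn : 2 ≤ n) : n * Real.log 2 ≤ 3 * Real.log (cfq ρ n) := by
  have h := two_pow_le_cfq hρ hirr n
  have hq := (cfq_pos_mono hρ hirr n).1
  have hq2 : 2 ≤ cfq ρ n := by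
    have : (2 : ℤ) ^ 2 ≤ 2 ^ n := pow_le_pow_right₀ (by norm_num) hn
    nlinarith
  have hR : (2 : ℝ) ^ n ≤ (cfq ρ n : ℝ) ^ 3 := by
    have : (2 : ℤ) ^ n ≤ cfq ρ n ^ 3 := by nlinarith [sq_nonneg (cfq ρ n)]
    exact_mod_cast this
  have := Real.log_le_log (by positivity) hR
  rw [Real.log_pow, Real.log_pow] at this
  exact_mod_cast this

/-- A bound on the partial quotients that is uniform in `n ≥ 1`; the finitely many quotients
not controlled by the Diophantine condition are absorbed into the constant. -/
lemma exists_cfa_bound {ρ : ℝ} (h : DiophCond ρ) :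
    ∃ K : ℝ, 0 < K ∧ ∀ n : ℕ, 1 ≤ n → (cfa ρ (n + 1) : ℝ) + 2 ≤ K * n ^ 2 := by
  obtain ⟨N, hN⟩ := h
  have hS : 0 ≤ ∑ i ∈ Finset.range N, |(cfa ρ i : ℝ)| :=
    Finset.sum_nonneg fun _ _ => abs_nonneg _
  refine ⟨6 + ∑ i ∈ Finset.range N, |(cfa ρ i : ℝ)|, by positivity, fun n hn => ?_⟩
  have hn' : (1 : ℝ) ≤ n := by exact_mod_cast hn
  have hn2 : (1 : ℝ) ≤ (n : ℝ) ^ 2 := one_le_pow₀ hn'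
  rcases le_or_gt N (n + 1) with hc | hc
  · have : (cfa ρ (n + 1) : ℝ) ≤ ((n : ℝ) + 1) ^ 2 := by exact_mod_cast hN _ hc
    nlinarith
  · have h1 := Finset.single_le_sum (f := fun i => |(cfa ρ i : ℝ)|)
      (fun _ _ => abs_nonneg _) (Finset.mem_range.2 hc)
    have h2 := le_abs_self (cfa ρ (n + 1) : ℝ)
    nlinarith

/-- under the Diophantine condition (2), there is a constant `c > 0` with
`|pₙ − qₙ·ρ| ≥ c/(qₙ·(ln qₙ)²)` for all `n ≥ 2`. -/
theorem stmt_3 (ρ : ℝ) (hρ : ρ ∈ Set.Ioo (0 : ℝ) 1) (hirr : Irrational ρ)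
    (hdioph : DiophCond ρ) :
    ∃ c : ℝ, 0 < c ∧ ∀ n : ℕ, 2 ≤ n →
      c / ((cfq ρ n : ℝ) * (Real.log (cfq ρ n)) ^ 2) ≤
        |(cfp ρ n : ℝ) - (cfq ρ n : ℝ) * ρ| := by
  obtain ⟨K, hK, hb⟩ := exists_cfa_bound hdioph
  have hl : 0 < Real.log 2 := Real.log_pos (by norm_num)
  -- `K n² ≤ (9 K / (log 2)²) (log qₙ)²`, so the reciprocal of this factor serves as `c`.
  refine ⟨Real.log 2 ^ 2 / (9 * K), by positivity, fun n hn => ?_⟩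
  obtain ⟨m, rfl⟩ : ∃ m, n = m + 1 := ⟨n - 1, by omega⟩
  have hlog := nat_mul_log_le hρ hirr (m + 1) hn
  have hlow := abs_rem_lower hρ hirr m
  have hbn := hb (m + 1) (by omega)
  have hq : (1 : ℝ) ≤ cfq ρ (m + 1) := by exact_mod_cast (cfq_pos_mono hρ hirr (m + 1)).1
  rw [show m + 1 + 1 = m + 2 from rfl] at hbn
  have hnpos : (0 : ℝ) < (m + 1 : ℕ) := by positivity
  have hD := abs_nonneg ((cfp ρ (m + 1) : ℝ) - (cfq ρ (m + 1) : ℝ) * ρ)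
  generalize ((m + 1 : ℕ) : ℝ) = t at *
  generalize |(cfp ρ (m + 1) : ℝ) - (cfq ρ (m + 1) : ℝ) * ρ| = D at *
  generalize (cfq ρ (m + 1) : ℝ) = q at *
  generalize (cfa ρ (m + 2) : ℝ) = a at *
  have ht : 0 < t * Real.log 2 := mul_pos hnpos hl
  have hL : 0 < Real.log q := by linarith
  have hq0 : 0 < q := by linarith
  have hsq : (t * Real.log 2) ^ 2 ≤ (3 * Real.log q) ^ 2 := pow_le_pow_left₀ ht.le hlog 2
  rw [div_le_iff₀ (by positivity), div_le_iff₀ (by positivity)]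
  calc Real.log 2 ^ 2 ≤ Real.log 2 ^ 2 * (D * (q * (a + 2))) :=
        le_mul_of_one_le_right (by positivity) hlow
    _ ≤ Real.log 2 ^ 2 * (D * (q * (K * t ^ 2))) := by gcongr
    _ = D * q * K * (t * Real.log 2) ^ 2 := by ring
    _ ≤ D * q * K * (3 * Real.log q) ^ 2 := by gcongr
    _ = D * (q * Real.log q ^ 2) * (9 * K) := by ring
end

section
/- Suppose ρ ∈ (0,1) is irrational and its continued fraction partial quotients satisfy aₙ ≤ n² for all sufficiently large n. Then for any δ > 0, for all sufficiently small ε > 0 and every real x, there exists an integer n with 0 ≤ n ≤ ε^{−(1/3+δ)} and ‖x + n·ρ‖ ≤ ε^{1/3}. -/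
/-!
Write `rₙ = Gⁿ(ρ)` and `βₙ = r₀ r₁ ⋯ rₙ`. Induction gives `qₙ ρ - pₙ = (-1)ⁿ βₙ`, and
`qₙ₊₁ βₙ + qₙ βₙ₊₁ = 1`, so `|qₙ ρ - pₙ| ≤ 1 / qₙ` (`cfq_approx`). Since `pₙ` is invertible
modulo `qₙ`, the points `x + k pₙ / qₙ`, `0 ≤ k < qₙ`, include one within `1 / (2 qₙ)` of an
integer, and replacing `pₙ / qₙ` by `ρ` moves it by at most `1 / qₙ`. Hence every `x` admits
`k < qₙ` with `‖x + k ρ‖ ≤ 2 / qₙ` (`exists_shift`).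

Given `ε`, put `η = ε^{1/3}` and let `m + 1` be the first index with `2 / η ≤ q_{m+1}`, so that
`q_m < 2 / η`. The Diophantine condition yields `q_{m+1} ≤ ((m+1)² + 1) q_m`, and as `q_m` grows at
least like `√2 ^ m`, the polynomial factor is absorbed by an arbitrarily small power of `q_m`:
`q_{m+1} ≤ (q_m / 2)^{1 + 3δ} ≤ η^{-(1 + 3δ)} = ε^{-(1/3 + δ)}` for large `m`
(`eventually_cfq_succ_le`). Finally `m` is large when `ε` is small.
-/

open MeasureTheory Filter

/-! ### The Gauss orbit and the convergents -/

/-- The product `βₙ = r₀ r₁ ⋯ rₙ` along the Gauss orbit `rᵢ = Gⁱ(ρ)`; it equals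
`|qₙ ρ - pₙ|`. -/
noncomputable def gaussProd (ρ : ℝ) (n : ℕ) : ℝ := ∏ i ∈ Finset.range (n + 1), gaussMap^[i] ρ

lemma gaussMap_mem {x : ℝ} (hx : Irrational x) :
    gaussMap x ∈ Set.Ioo (0 : ℝ) 1 ∧ Irrational (gaussMap x) := by
  have h1 : Irrational (1 / x) := by rw [one_div]; exact hx.inv
  have h2 : Irrational (gaussMap x) := by
    unfold gaussMap Int.fract
    exact h1.sub_intCast _
  refine ⟨⟨lt_of_le_of_ne (Int.fract_nonneg _) ?_, Int.fract_lt_one _⟩, h2⟩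
  exact fun h => h2.ne_zero h.symm

lemma orbit_mul_succ {ρ : ℝ} (hρ : ρ ∈ Set.Ioo (0 : ℝ) 1) (hirr : Irrational ρ) (n : ℕ) :
    gaussMap^[n] ρ * gaussMap^[n + 1] ρ = 1 - cfa ρ (n + 1) * gaussMap^[n] ρ := by
  have h := (orbit_mem hρ hirr n).1.1
  rw [Function.iterate_succ_apply']
  have h2 : gaussMap (gaussMap^[n] ρ) = 1 / gaussMap^[n] ρ - cfa ρ (n + 1) := rfl
  rw [h2]
  field_simp

lemma gaussProd_pos {ρ : ℝ} (hρ : ρ ∈ Set.Ioo (0 : ℝ) 1) (hirr : Irrational ρ) (n : ℕ) :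
    0 < gaussProd ρ n :=
  Finset.prod_pos fun i _ => (orbit_mem hρ hirr i).1.1

lemma gaussProd_rec {ρ : ℝ} (hρ : ρ ∈ Set.Ioo (0 : ℝ) 1) (hirr : Irrational ρ) (n : ℕ) :
    gaussProd ρ (n + 2) = gaussProd ρ n - cfa ρ (n + 2) * gaussProd ρ (n + 1) := by
  have h := orbit_mul_succ hρ hirr (n + 1)
  unfold gaussProd
  rw [Finset.prod_range_succ _ (n + 2), Finset.prod_range_succ _ (n + 1), mul_assoc, h]
  ring

lemma gaussProd_zero (ρ : ℝ) : gaussProd ρ 0 = ρ := by simp [gaussProd]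

lemma gaussProd_one {ρ : ℝ} (hρ : ρ ∈ Set.Ioo (0 : ℝ) 1) (hirr : Irrational ρ) :
    gaussProd ρ 1 = 1 - cfa ρ 1 * ρ := by
  have h := orbit_mul_succ hρ hirr 0
  simpa [gaussProd, Finset.prod_range_succ] using h

lemma cfq_mul_sub {ρ : ℝ} (hρ : ρ ∈ Set.Ioo (0 : ℝ) 1) (hirr : Irrational ρ) (n : ℕ) :
    (cfq ρ n : ℝ) * ρ - cfp ρ n = (-1) ^ n * gaussProd ρ n ∧
    (cfq ρ (n + 1) : ℝ) * ρ - cfp ρ (n + 1) = (-1) ^ (n + 1) * gaussProd ρ (n + 1) := by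
  induction n with
  | zero =>
    refine ⟨by simp [cfq, cfp, gaussProd_zero], ?_⟩
    simp [cfq, cfp, gaussProd_one hρ hirr]
  | succ k ih =>
    refine ⟨ih.2, ?_⟩
    rw [gaussProd_rec hρ hirr]
    simp only [cfq, cfp]
    push_cast
    have h1 := ih.1
    have h2 := ih.2
    rw [pow_succ] at h2
    rw [pow_succ, pow_succ]
    linear_combination (cfa ρ (k + 2) : ℝ) * h2 + h1

lemma cfq_mul_gaussProd {ρ : ℝ} (hρ : ρ ∈ Set.Ioo (0 : ℝ) 1) (hirr : Irrational ρ) (n : ℕ) :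
    (cfq ρ (n + 1) : ℝ) * gaussProd ρ n + cfq ρ n * gaussProd ρ (n + 1) = 1 := by
  induction n with
  | zero => simp [cfq, gaussProd_one hρ hirr, gaussProd_zero]
  | succ k ih =>
    rw [gaussProd_rec hρ hirr]
    simp only [cfq]
    push_cast
    linear_combination ih

lemma cfp_cfq_det (ρ : ℝ) (n : ℕ) :
    cfp ρ (n + 1) * cfq ρ n - cfp ρ n * cfq ρ (n + 1) = (-1) ^ n := by
  induction n with
  | zero => simp [cfq, cfp]
  | succ k ih =>
    simp only [cfq, cfp]
    rw [pow_succ]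
    linear_combination -ih

lemma isCoprime_cfp_cfq (ρ : ℝ) (n : ℕ) : IsCoprime (cfp ρ n) (cfq ρ n) := by
  have h := cfp_cfq_det ρ n
  have h2 : ((-1 : ℤ) ^ n) * (-1) ^ n = 1 := by rw [← mul_pow]; simp
  refine ⟨-(-1) ^ n * cfq ρ (n + 1), (-1) ^ n * cfp ρ (n + 1), ?_⟩
  linear_combination (-1) ^ n * h + h2

lemma cfq_approx {ρ : ℝ} (hρ : ρ ∈ Set.Ioo (0 : ℝ) 1) (hirr : Irrational ρ) (n : ℕ) :
    |(cfq ρ n : ℝ) * ρ - cfp ρ n| ≤ 1 / cfq ρ n := by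
  have h1 : (1 : ℝ) ≤ cfq ρ n := by exact_mod_cast (cfq_pos_mono hρ hirr n).1
  have h2 : (cfq ρ n : ℝ) ≤ cfq ρ (n + 1) := by exact_mod_cast (cfq_pos_mono hρ hirr n).2
  have hb := gaussProd_pos hρ hirr n
  have hb' := gaussProd_pos hρ hirr (n + 1)
  rw [(cfq_mul_sub hρ hirr n).1, abs_mul, abs_pow, abs_neg, abs_one, one_pow, one_mul,
    abs_of_pos hb, le_div_iff₀ (by linarith)]
  nlinarith [cfq_mul_gaussProd hρ hirr n]

/-! ### Covering the circle by an orbit segment of length `qₙ` -/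

lemma exists_shift {ρ : ℝ} (hρ : ρ ∈ Set.Ioo (0 : ℝ) 1) (hirr : Irrational ρ) (n : ℕ) (x : ℝ) :
    ∃ k : ℕ, (k : ℝ) ≤ cfq ρ n ∧ distNearestInt (x + k * ρ) ≤ 2 / cfq ρ n := by
  have hq1 := (cfq_pos_mono hρ hirr n).1
  have happ := cfq_approx hρ hirr n
  obtain ⟨u, v, huv⟩ := isCoprime_cfp_cfq ρ n
  set q := cfq ρ n
  set p := cfp ρ n
  set R := round ((q : ℝ) * x) with hR
  have hqpos : (0 : ℝ) < q := by exact_mod_cast hq1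
  -- `k` is chosen with `k p ≡ -R` modulo `q`, so `(R + k p) / q` is the integer `z`.
  obtain ⟨k, hk⟩ := Int.eq_ofNat_of_zero_le (Int.emod_nonneg (-(R * u)) (show q ≠ 0 by omega))
  have hkq : (k : ℤ) < q := by rw [← hk]; exact Int.emod_lt_of_pos _ (by omega)
  have hkqR : (k : ℝ) ≤ q := by exact_mod_cast hkq.le
  obtain ⟨z, hz⟩ : q ∣ R + k * p := by
    refine ⟨R * v - (-(R * u)) / q * p, ?_⟩
    have h := Int.emod_add_mul_ediv (-(R * u)) q
    rw [hk] at h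
    linear_combination p * h - R * huv
  refine ⟨k, hkqR, ?_⟩
  have hzR : (R : ℝ) + k * p = q * z := by exact_mod_cast hz
  have hround : |(q : ℝ) * x - R| ≤ 1 / 2 := abs_sub_round _
  refine (round_le _ z).trans ?_
  rw [le_div_iff₀ hqpos, ← abs_of_pos hqpos, ← abs_mul]
  have hid : (x + k * ρ - z) * q = (q * x - R) + k * (q * ρ - p) := by
    linear_combination hzR
  rw [hid]
  refine (abs_add_le _ _).trans ?_
  have h3 : |(k : ℝ) * (q * ρ - p)| ≤ 1 := by
    rw [abs_mul, Nat.abs_cast]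
    calc (k : ℝ) * |(q : ℝ) * ρ - p| ≤ q * (1 / q) := by gcongr
      _ = 1 := by field_simp
  linarith

/-! ### Growth of the denominators -/

lemma sqrt_two_pow_le_cfq {ρ : ℝ} (hρ : ρ ∈ Set.Ioo (0 : ℝ) 1) (hirr : Irrational ρ) (n : ℕ) :
    √2 ^ n ≤ 2 * (cfq ρ n : ℝ) ∧ √2 ^ (n + 1) ≤ 2 * (cfq ρ (n + 1) : ℝ) := by
  have hs : √2 ^ 2 = 2 := Real.sq_sqrt (by norm_num)
  induction n with
  | zero =>
    have h : (1 : ℝ) ≤ cfq ρ 1 := by exact_mod_cast (cfq_pos_mono hρ hirr 1).1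
    refine ⟨by simp [cfq], ?_⟩
    have : √2 ≤ 2 := by nlinarith [Real.sqrt_nonneg 2]
    simp only [zero_add, pow_one]
    linarith
  | succ k ih =>
    refine ⟨ih.2, ?_⟩
    have h2 : 2 * cfq ρ k ≤ cfq ρ (k + 2) := by
      have h := one_le_cfa hρ hirr (k + 1)
      have h' := cfq_pos_mono hρ hirr k
      simp only [cfq]
      nlinarith [h'.1, h'.2]
    have h2' : 2 * (cfq ρ k : ℝ) ≤ cfq ρ (k + 2) := by exact_mod_cast h2
    calc √2 ^ (k + 1 + 1) = √2 ^ k * 2 := by linear_combination √2 ^ k * hs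
      _ ≤ 2 * (cfq ρ (k + 2) : ℝ) := by linarith [ih.1]

lemma eventually_cfq_succ_le {ρ : ℝ} (hρ : ρ ∈ Set.Ioo (0 : ℝ) 1) (hirr : Irrational ρ)
    (hd : DiophCond ρ) {s : ℝ} (hs : 0 < s) :
    ∀ᶠ m : ℕ in atTop, (cfq ρ (m + 1) : ℝ) ≤ ((cfq ρ m : ℝ) / 2) ^ (1 + s) := by
  obtain ⟨N, hN⟩ := hd
  have hsqrt : 1 < √2 := by rw [Real.lt_sqrt] <;> norm_num
  have hb : 1 < √2 ^ s := Real.one_lt_rpow hsqrt hs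
  -- Beyond this index, `2 ((m+1)² + 1) ≤ 10 m² ≤ 4^{-s} (√2^s)^m ≤ (q_m / 2)^s`.
  have hlim := tendsto_pow_const_div_const_pow_of_one_lt 2 hb
  have hev := hlim.eventually (gt_mem_nhds (show (0 : ℝ) < (4 ^ s)⁻¹ / 10 by positivity))
  filter_upwards [hev, eventually_ge_atTop N, eventually_ge_atTop 1] with m hm hmN hm1
  have hq1 : (1 : ℝ) ≤ cfq ρ m := by exact_mod_cast (cfq_pos_mono hρ hirr m).1
  have hm1' : (1 : ℝ) ≤ m := by exact_mod_cast hm1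
  have hgrow := (sqrt_two_pow_le_cfq hρ hirr m).1
  have hstep : (cfq ρ (m + 1) : ℝ) ≤ (((m : ℝ) + 1) ^ 2 + 1) * cfq ρ m := by
    obtain ⟨j, rfl⟩ : ∃ j, m = j + 1 := ⟨m - 1, by omega⟩
    have ha := hN (j + 2) (by omega)
    have h' := cfq_pos_mono hρ hirr j
    have : cfq ρ (j + 2) ≤ (((j + 1 : ℕ) + 1 : ℤ) ^ 2 + 1) * cfq ρ (j + 1) := by
      simp only [cfq]
      push_cast at ha ⊢
      have e : (j : ℤ) + 1 + 1 = j + 2 := by ring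
      rw [e]
      nlinarith [h'.1, h'.2]
    exact_mod_cast this
  have hpow : (√2 ^ s) ^ m ≤ 4 ^ s * ((cfq ρ m : ℝ) / 2) ^ s := by
    rw [← Real.mul_rpow (by norm_num) (by positivity), ← Real.rpow_natCast, ← Real.rpow_mul
      (by positivity), mul_comm s, Real.rpow_mul (by positivity), Real.rpow_natCast]
    refine Real.rpow_le_rpow (by positivity) ?_ hs.le
    linarith
  have hpoly : 10 * (m : ℝ) ^ 2 ≤ ((cfq ρ m : ℝ) / 2) ^ s := by
    have hbm : 0 < (√2 ^ s) ^ m := by positivity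
    rw [div_lt_iff₀ hbm] at hm
    have h4 : (0 : ℝ) < 4 ^ s := by positivity
    have : (4 ^ s : ℝ)⁻¹ * (√2 ^ s) ^ m ≤ ((cfq ρ m : ℝ) / 2) ^ s := by
      rw [inv_mul_le_iff₀ h4]; exact hpow
    linarith
  rw [Real.rpow_add (by positivity), Real.rpow_one]
  calc (cfq ρ (m + 1) : ℝ) ≤ (((m : ℝ) + 1) ^ 2 + 1) * cfq ρ m := hstep
    _ ≤ (5 * (m : ℝ) ^ 2) * cfq ρ m := by
      gcongr
      nlinarith
    _ = (cfq ρ m : ℝ) / 2 * (10 * (m : ℝ) ^ 2) := by ring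
    _ ≤ _ := by gcongr

/-- under the Diophantine condition (2), for any `δ > 0` and all
sufficiently small `ε > 0`, every real `x` admits an integer `n` with
`0 ≤ n ≤ ε^{−(1/3+δ)}` and `‖x + nρ‖ ≤ ε^{1/3}`. -/
theorem stmt_7 (ρ : ℝ) (hρ : ρ ∈ Set.Ioo (0 : ℝ) 1) (hirr : Irrational ρ)
    (hdioph : DiophCond ρ) :
    ∀ δ : ℝ, 0 < δ → ∃ ε₀ : ℝ, 0 < ε₀ ∧ ∀ ε : ℝ, 0 < ε → ε ≤ ε₀ → ∀ x : ℝ,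
      ∃ n : ℕ, (n : ℝ) ≤ ε ^ (-(1 / 3 + δ) : ℝ) ∧
        distNearestInt (x + (n : ℝ) * ρ) ≤ ε ^ (1 / 3 : ℝ) := by
  intro δ hδ
  obtain ⟨M, hM⟩ := eventually_atTop.1
    (eventually_cfq_succ_le hρ hirr hdioph (s := 3 * δ) (by positivity))
  have hmono : Monotone (cfq ρ) := monotone_nat_of_le_succ fun n => (cfq_pos_mono hρ hirr n).2
  have hqpos : ∀ n, (0 : ℝ) < cfq ρ n := fun n => by
    exact_mod_cast (cfq_pos_mono hρ hirr n).1
  have hMpos := hqpos M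
  refine ⟨((cfq ρ M : ℝ)⁻¹) ^ 3, by positivity, fun ε hε hεle x => ?_⟩
  set η := ε ^ (1 / 3 : ℝ) with hη
  have hηpos : 0 < η := by positivity
  have hηε : η ^ 3 = ε := by
    rw [hη, ← Real.rpow_natCast, ← Real.rpow_mul hε.le]; norm_num
  have hηM : η ≤ (cfq ρ M : ℝ)⁻¹ := by
    rw [← hηε] at hεle
    exact le_of_pow_le_pow_left₀ (by norm_num) (by positivity) hεle
  have hMlt : (cfq ρ M : ℝ) < 2 / η := by
    rw [lt_div_iff₀ hηpos]
    have : (cfq ρ M : ℝ) * η ≤ cfq ρ M * (cfq ρ M : ℝ)⁻¹ := by gcongr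
    rw [mul_inv_cancel₀ hMpos.ne'] at this
    linarith
  have hex : ∃ m, 2 / η ≤ (cfq ρ m : ℝ) := by
    have hsqrt : 1 < √2 := by rw [Real.lt_sqrt] <;> norm_num
    obtain ⟨m, hm⟩ := pow_unbounded_of_one_lt (2 * (2 / η)) hsqrt
    exact ⟨m, by linarith [(sqrt_two_pow_le_cfq hρ hirr m).1]⟩
  classical
  have hspec := Nat.find_spec hex
  have hmin : ∀ j, j < Nat.find hex → (cfq ρ j : ℝ) < 2 / η :=
    fun j hj => not_le.1 (Nat.find_min hex hj)
  have hgt : M < Nat.find hex := by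
    by_contra hle
    have h : (cfq ρ (Nat.find hex) : ℝ) ≤ cfq ρ M := by exact_mod_cast hmono (not_lt.1 hle)
    linarith
  obtain ⟨m, hm⟩ : ∃ m, Nat.find hex = m + 1 := ⟨Nat.find hex - 1, by omega⟩
  rw [hm] at hspec hmin hgt
  obtain ⟨k, hk, hdist⟩ := exists_shift hρ hirr (m + 1) x
  refine ⟨k, ?_, hdist.trans ?_⟩
  · have hqm := hqpos m
    calc (k : ℝ) ≤ cfq ρ (m + 1) := hk
      _ ≤ ((cfq ρ m : ℝ) / 2) ^ (1 + 3 * δ) := hM m (by omega)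
      _ ≤ (η⁻¹) ^ (1 + 3 * δ) := by
        refine Real.rpow_le_rpow (by positivity) ?_ (by positivity)
        have h := hmin m (by omega)
        have e : 2 / η = 2 * η⁻¹ := by ring
        linarith
      _ = ε ^ (-(1 / 3 + δ) : ℝ) := by
        rw [hη, ← Real.rpow_neg hε.le, ← Real.rpow_mul hε.le]
        congr 1
        ring
  · rw [div_le_iff₀ hηpos] at hspec
    rw [div_le_iff₀ (hqpos _)]
    linarith
end
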